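/- Let (ξ, η) be an absolutely continuous pair of random vectors with joint density p_{ξ,η}, marginal densities p_ξ and p_η, mean m = (m_ξ, m_η), and non-singular covariance matrix Σ with blocks Σ_{ξξ}, Σ_{ξη}, Σ_{ηξ}, Σ_{ηη}. Then I(ξ; η) = (1/2)[log det Σ_{ξξ} + log det Σ_{ηη} − log det Σ] + D_KL(p_{ξ,η} ‖ N(m, Σ)) − D_KL(p_ξ ⊗ p_η ‖ N(m, diag(Σ_{ξξ}, Σ_{ηη}))), where diag(Σ_{ξξ}, Σ_{ηη}) is the block-diagonal matrix with blocks Σ_{ξξ} and Σ_{ηη}. -/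

import Mathlib

/-!
For every product density `G ⊗ H` one has the Pythagorean identity
`D_KL(p ‖ G ⊗ H) = I(ξ; η) + D_KL(p_ξ ⊗ p_η ‖ G ⊗ H)`: the logarithm of
`(p_ξ ⊗ p_η) / (G ⊗ H)` is a function of `ξ` plus a function of `η`, so its expectation is the
same under `p` and under `p_ξ ⊗ p_η`. Apply this to `N(m, diag(Σ_ξξ, Σ_ηη))`, which is a product
density, and replace it by `N(m, Σ)` in `D_KL(p ‖ N(m, diag(Σ_ξξ, Σ_ηη)))`. The cost is the
`p`-expectation of the log-ratio of the two Gaussian densities. There the quadratic forms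
contribute `tr (Σ⁻¹ Σ)` and `tr (diag(Σ_ξξ, Σ_ηη)⁻¹ Σ)`, both equal to the dimension, so only the
log-determinants remain.
-/

open MeasureTheory Matrix Real

/-- The probability density function of the multivariate Gaussian distribution `N(m, S)`
on `ι → ℝ` with mean `m` and (positive-definite) covariance matrix `S`. -/
noncomputable def gaussianPdf {ι : Type*} [Fintype ι] [DecidableEq ι]
    (m : ι → ℝ) (S : Matrix ι ι ℝ) (x : ι → ℝ) : ℝ :=
  (Real.sqrt ((2 * Real.pi) ^ (Fintype.card ι) * S.det))⁻¹ *
    Real.exp (-(1 / 2 : ℝ) * ((x - m) ⬝ᵥ S⁻¹.mulVec (x - m)))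

/-! ### Expectations under a joint density and its marginals -/

/-- The product density `f ⊗ g`. -/
def prodDensity {α β : Type*} (f : α → ℝ) (g : β → ℝ) (w : α × β) : ℝ :=
  f w.1 * g w.2

/-- The density, with respect to the measure on the first factor, of the first marginal of a joint
density `P`. -/
noncomputable def fstMarginal {α β : Type*} [MeasurableSpace β] (ν : Measure β) (P : α × β → ℝ)
    (x : α) : ℝ :=
  ∫ y, P (x, y) ∂ν

/-- The density, with respect to the measure on the second factor, of the second marginal of a
joint density `P`. -/
noncomputable def sndMarginal {α β : Type*} [MeasurableSpace α] (μ : Measure α) (P : α × β → ℝ)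
    (y : β) : ℝ :=
  ∫ x, P (x, y) ∂μ

section Marginals

variable {α β : Type*} [MeasurableSpace α] [MeasurableSpace β] {μ : Measure α} {ν : Measure β}
  [SFinite ν] {P : α × β → ℝ}

theorem integrable_fstMarginal (hP : Integrable P (μ.prod ν)) : Integrable (fstMarginal ν P) μ :=
  hP.integral_prod_left

variable [SFinite μ]

theorem integrable_mul_comp_fst (hP : Integrable P (μ.prod ν)) (hP0 : ∀ w, 0 ≤ P w) {u : α → ℝ}
    (hu : AEStronglyMeasurable u μ) (h : Integrable (fun x => fstMarginal ν P x * u x) μ) :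
    Integrable (fun w => P w * u w.1) (μ.prod ν) := by
  have hmeas : AEStronglyMeasurable (fun w => P w * u w.1) (μ.prod ν) :=
    hP.aestronglyMeasurable.mul hu.comp_fst
  rw [integrable_prod_iff hmeas]
  refine ⟨?_, ?_⟩
  · filter_upwards [hP.prod_right_ae] with x hx using hx.mul_const _
  · simpa only [norm_mul, integral_mul_const, norm_of_nonneg (hP0 _),
      norm_of_nonneg (integral_nonneg fun y => hP0 (_, y)), fstMarginal] using h.norm

theorem integral_mul_comp_fst {u : α → ℝ} (h : Integrable (fun w => P w * u w.1) (μ.prod ν)) :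
    ∫ w, P w * u w.1 ∂(μ.prod ν) = ∫ x, fstMarginal ν P x * u x ∂μ := by
  simp only [integral_prod _ h, integral_mul_const, fstMarginal]

theorem integral_fstMarginal (hP : Integrable P (μ.prod ν)) :
    ∫ x, fstMarginal ν P x ∂μ = ∫ w, P w ∂(μ.prod ν) :=
  (integral_prod _ hP).symm

theorem integrable_sndMarginal (hP : Integrable P (μ.prod ν)) : Integrable (sndMarginal μ P) ν :=
  hP.integral_prod_right

theorem integral_sndMarginal (hP : Integrable P (μ.prod ν)) :
    ∫ y, sndMarginal μ P y ∂ν = ∫ w, P w ∂(μ.prod ν) :=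
  (integral_prod_symm _ hP).symm

theorem integrable_mul_comp_snd (hP : Integrable P (μ.prod ν)) (hP0 : ∀ w, 0 ≤ P w) {v : β → ℝ}
    (hv : AEStronglyMeasurable v ν) (h : Integrable (fun y => sndMarginal μ P y * v y) ν) :
    Integrable (fun w => P w * v w.2) (μ.prod ν) :=
  (integrable_mul_comp_fst hP.swap (fun w => hP0 w.swap) hv h).swap

theorem integral_mul_comp_snd {v : β → ℝ} (h : Integrable (fun w => P w * v w.2) (μ.prod ν)) :
    ∫ w, P w * v w.2 ∂(μ.prod ν) = ∫ y, sndMarginal μ P y * v y ∂ν :=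
  (integral_prod_swap _).symm.trans (integral_mul_comp_fst h.swap)

theorem ae_fstMarginal_ne_zero (hP : Integrable P (μ.prod ν)) (hP0 : ∀ w, 0 ≤ P w) :
    ∀ᵐ w ∂(μ.prod ν), P w ≠ 0 → fstMarginal ν P w.1 ≠ 0 := by
  classical
  let Z : Set α := {x | fstMarginal ν P x = 0}
  have hZ : NullMeasurableSet Z μ :=
    (integrable_fstMarginal hP).aemeasurable.nullMeasurableSet_preimage (measurableSet_singleton 0)
  have hZ0 : ∀ x, fstMarginal ν P x * Z.indicator 1 x = 0 := fun x => by
    by_cases hx : x ∈ Z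
    · rw [show fstMarginal ν P x = 0 from hx, zero_mul]
    · rw [Set.indicator_of_notMem hx, mul_zero]
  have hint : Integrable (fun w => P w * Z.indicator 1 w.1) (μ.prod ν) :=
    integrable_mul_comp_fst hP hP0 (aestronglyMeasurable_const.indicator₀ hZ) (by simp [hZ0])
  have hzero : ∫ w, P w * Z.indicator 1 w.1 ∂(μ.prod ν) = 0 := by
    simp [integral_mul_comp_fst hint, hZ0]
  have hnonneg : 0 ≤ fun w => P w * Z.indicator 1 w.1 := fun w =>
    mul_nonneg (hP0 w) (Set.indicator_nonneg (fun _ _ => zero_le_one) _)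
  filter_upwards [(integral_eq_zero_iff_of_nonneg hnonneg hint).1 hzero] with w hw hPw hZw
  exact hPw (by simpa [Set.indicator_of_mem (show w.1 ∈ Z from hZw)] using hw)

theorem ae_sndMarginal_ne_zero (hP : Integrable P (μ.prod ν)) (hP0 : ∀ w, 0 ≤ P w) :
    ∀ᵐ w ∂(μ.prod ν), P w ≠ 0 → sndMarginal μ P w.2 ≠ 0 :=
  Measure.measurePreserving_swap.quasiMeasurePreserving.ae
    (ae_fstMarginal_ne_zero hP.swap fun w => hP0 w.swap)

-- As `∫ g ≠ 0`, the integrand has an integrable slice at some `y` with `g y ≠ 0`.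
theorem integrable_mul_left_of_prodDensity_mul_add {f u : α → ℝ} {g v : β → ℝ}
    (hf : Integrable f μ) (hg : ∫ y, g y ∂ν ≠ 0)
    (h : Integrable (fun w => prodDensity f g w * (u w.1 + v w.2)) (μ.prod ν)) :
    Integrable (fun x => f x * u x) μ := by
  obtain ⟨y, hgy, hy⟩ : ∃ y, g y ≠ 0 ∧ Integrable (fun x => f x * g y * (u x + v y)) μ := by
    by_contra! hcon
    refine hg (integral_eq_zero_of_ae ?_)
    filter_upwards [h.prod_left_ae] with y hy
    by_contra hgy
    exact hcon y hgy hy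
  refine ((hy.const_mul (g y)⁻¹).sub (hf.mul_const (v y))).congr (.of_forall fun x => ?_)
  simp only [Pi.sub_apply]
  field_simp
  ring

theorem integrable_mul_right_of_prodDensity_mul_add {f u : α → ℝ} {g v : β → ℝ}
    (hf : ∫ x, f x ∂μ ≠ 0) (hg : Integrable g ν)
    (h : Integrable (fun w => prodDensity f g w * (u w.1 + v w.2)) (μ.prod ν)) :
    Integrable (fun y => g y * v y) ν := by
  refine integrable_mul_left_of_prodDensity_mul_add (v := u) hg hf
    (h.swap.congr (.of_forall fun w => ?_))
  simp only [Function.comp_apply, prodDensity, Prod.fst_swap, Prod.snd_swap]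
  ring

theorem integral_prodDensity_mul_add {f u : α → ℝ} {g v : β → ℝ}
    (hf : Integrable f μ) (hf1 : ∫ x, f x ∂μ = 1) (hg : Integrable g ν) (hg1 : ∫ y, g y ∂ν = 1)
    (hfu : Integrable (fun x => f x * u x) μ) (hgv : Integrable (fun y => g y * v y) ν) :
    ∫ w, prodDensity f g w * (u w.1 + v w.2) ∂(μ.prod ν) =
      (∫ x, f x * u x ∂μ) + ∫ y, g y * v y ∂ν := by
  calc ∫ w, prodDensity f g w * (u w.1 + v w.2) ∂(μ.prod ν)
      = ∫ w, (f w.1 * u w.1 * g w.2 + f w.1 * (g w.2 * v w.2)) ∂(μ.prod ν) := by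
        congr 1 with w
        rw [prodDensity]
        ring
    _ = (∫ x, f x * u x ∂μ) * (∫ y, g y ∂ν) + (∫ x, f x ∂μ) * ∫ y, g y * v y ∂ν := by
        rw [integral_add (hfu.mul_prod hg) (hf.mul_prod hgv),
          integral_prod_mul (fun x => f x * u x) g, integral_prod_mul f fun y => g y * v y]
    _ = (∫ x, f x * u x ∂μ) + ∫ y, g y * v y ∂ν := by
        rw [hf1, hg1, mul_one, one_mul]

theorem integrable_and_integral_mul_add_eq_prodDensity_marginals (hP : Integrable P (μ.prod ν))
    (hP0 : ∀ w, 0 ≤ P w) (hP1 : ∫ w, P w ∂(μ.prod ν) = 1) {u : α → ℝ} {v : β → ℝ}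
    (hu : AEStronglyMeasurable u μ) (hv : AEStronglyMeasurable v ν)
    (h : Integrable (fun w => prodDensity (fstMarginal ν P) (sndMarginal μ P) w *
      (u w.1 + v w.2)) (μ.prod ν)) :
    Integrable (fun w => P w * (u w.1 + v w.2)) (μ.prod ν) ∧
      ∫ w, P w * (u w.1 + v w.2) ∂(μ.prod ν) =
        ∫ w, prodDensity (fstMarginal ν P) (sndMarginal μ P) w * (u w.1 + v w.2) ∂(μ.prod ν) := by
  have hf := integrable_fstMarginal hP
  have hg := integrable_sndMarginal hP
  have hf1 := (integral_fstMarginal hP).trans hP1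
  have hg1 := (integral_sndMarginal hP).trans hP1
  have hfu := integrable_mul_left_of_prodDensity_mul_add hf (hg1 ▸ one_ne_zero) h
  have hgv := integrable_mul_right_of_prodDensity_mul_add (hf1 ▸ one_ne_zero) hg h
  have hPu := integrable_mul_comp_fst hP hP0 hu hfu
  have hPv := integrable_mul_comp_snd hP hP0 hv hgv
  rw [integral_prodDensity_mul_add hf hf1 hg hg1 hfu hgv]
  simp only [mul_add]
  exact ⟨hPu.add hPv, by
    rw [integral_add hPu hPv, integral_mul_comp_fst hPu, integral_mul_comp_snd hPv]⟩

end Marginals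

/-! ### Kullback–Leibler divergence of densities -/

/-- The integrand `p log (p / q)` of the Kullback–Leibler divergence `D_KL(p ‖ q)` of two densities
with respect to a common measure. It vanishes where `p` does, and, by the convention `x / 0 = 0`,
also where `q` does. -/
noncomputable def klIntegrand {α : Type*} (p q : α → ℝ) (x : α) : ℝ :=
  p x * log (p x / q x)

theorem klIntegrand_eq_add {α : Type*} (p : α → ℝ) {q q' : α → ℝ} {x : α} (hq : q x ≠ 0)
    (hq' : q' x ≠ 0) :
    klIntegrand p q' x = klIntegrand p q x + (p x * log (q x) - p x * log (q' x)) := by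
  rcases eq_or_ne (p x) 0 with hp | hp
  · simp [klIntegrand, hp]
  · rw [klIntegrand, klIntegrand, log_div hp hq, log_div hp hq']
    ring

theorem klIntegrand_prodDensity {α β : Type*} (f G : α → ℝ) (g H : β → ℝ) {w : α × β}
    (hG : G w.1 ≠ 0) (hH : H w.2 ≠ 0) :
    klIntegrand (prodDensity f g) (prodDensity G H) w =
      prodDensity f g w * (log (f w.1 / G w.1) + log (g w.2 / H w.2)) := by
  rcases eq_or_ne (f w.1) 0 with hf | hf
  · simp [klIntegrand, prodDensity, hf]
  rcases eq_or_ne (g w.2) 0 with hg | hg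
  · simp [klIntegrand, prodDensity, hg]
  rw [klIntegrand, prodDensity, prodDensity, mul_div_mul_comm,
    log_mul (div_ne_zero hf hG) (div_ne_zero hg hH)]

theorem klIntegrand_prodDensity_right {α β : Type*} {P : α × β → ℝ} {f G : α → ℝ} {g H : β → ℝ}
    {w : α × β} (hf : P w ≠ 0 → f w.1 ≠ 0) (hg : P w ≠ 0 → g w.2 ≠ 0) (hG : G w.1 ≠ 0)
    (hH : H w.2 ≠ 0) :
    klIntegrand P (prodDensity f g) w = klIntegrand P (prodDensity G H) w -
      P w * (log (f w.1 / G w.1) + log (g w.2 / H w.2)) := by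
  rcases eq_or_ne (P w) 0 with hP | hP
  · simp [klIntegrand, hP]
  have hGH : prodDensity G H w ≠ 0 := mul_ne_zero hG hH
  have hfg : prodDensity f g w ≠ 0 := mul_ne_zero (hf hP) (hg hP)
  rw [klIntegrand_eq_add P hGH hfg, prodDensity, prodDensity, log_mul hG hH,
    log_mul (hf hP) (hg hP), log_div (hf hP) hG, log_div (hg hP) hH]
  ring

section Divergence

variable {α β : Type*} [MeasurableSpace α] [MeasurableSpace β] {μ : Measure α} {ν : Measure β}

theorem integrable_klIntegrand_of_integrable_mul_log {p q q' : α → ℝ} (hq : ∀ x, q x ≠ 0)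
    (hq' : ∀ x, q' x ≠ 0) (hlog : Integrable (fun x => p x * log (q x)) μ)
    (hlog' : Integrable (fun x => p x * log (q' x)) μ) (h : Integrable (klIntegrand p q) μ) :
    Integrable (klIntegrand p q') μ :=
  (h.add (hlog.sub hlog')).congr (.of_forall fun x => (klIntegrand_eq_add p (hq x) (hq' x)).symm)

theorem integral_klIntegrand_eq_add {p q q' : α → ℝ} (hq : ∀ x, q x ≠ 0) (hq' : ∀ x, q' x ≠ 0)
    (hlog : Integrable (fun x => p x * log (q x)) μ)
    (hlog' : Integrable (fun x => p x * log (q' x)) μ) (h : Integrable (klIntegrand p q) μ) :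
    ∫ x, klIntegrand p q' x ∂μ = (∫ x, klIntegrand p q x ∂μ) +
      ((∫ x, p x * log (q x) ∂μ) - ∫ x, p x * log (q' x) ∂μ) := by
  simp only [klIntegrand_eq_add p (hq _) (hq' _)]
  exact (integral_add h (hlog.sub hlog')).trans (congrArg _ (integral_sub hlog hlog'))

theorem integral_klIntegrand_prodDensity_marginals [SFinite μ] [SFinite ν] {P : α × β → ℝ}
    (hP : Integrable P (μ.prod ν)) (hP0 : ∀ w, 0 ≤ P w) (hP1 : ∫ w, P w ∂(μ.prod ν) = 1)
    {G : α → ℝ} {H : β → ℝ} (hG : AEMeasurable G μ) (hH : AEMeasurable H ν)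
    (hG0 : ∀ x, G x ≠ 0) (hH0 : ∀ y, H y ≠ 0)
    (hKL : Integrable (klIntegrand P (prodDensity G H)) (μ.prod ν))
    (hKLm : Integrable (klIntegrand (prodDensity (fstMarginal ν P) (sndMarginal μ P))
      (prodDensity G H)) (μ.prod ν)) :
    ∫ w, klIntegrand P (prodDensity (fstMarginal ν P) (sndMarginal μ P)) w ∂(μ.prod ν) =
      (∫ w, klIntegrand P (prodDensity G H) w ∂(μ.prod ν)) -
        ∫ w, klIntegrand (prodDensity (fstMarginal ν P) (sndMarginal μ P)) (prodDensity G H) w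
          ∂(μ.prod ν) := by
  have hu : AEStronglyMeasurable (fun x => log (fstMarginal ν P x / G x)) μ :=
    ((integrable_fstMarginal hP).aemeasurable.div hG).log.aestronglyMeasurable
  have hv : AEStronglyMeasurable (fun y => log (sndMarginal μ P y / H y)) ν :=
    ((integrable_sndMarginal hP).aemeasurable.div hH).log.aestronglyMeasurable
  have hsplit := fun w => klIntegrand_prodDensity (fstMarginal ν P) G (sndMarginal μ P) H
    (hG0 (Prod.fst w)) (hH0 (Prod.snd w))
  obtain ⟨hlog, hlog_eq⟩ := integrable_and_integral_mul_add_eq_prodDensity_marginals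
    hP hP0 hP1 hu hv (hKLm.congr (.of_forall hsplit))
  simp only [hsplit]
  rw [← hlog_eq, ← integral_sub hKL hlog]
  refine integral_congr_ae ?_
  filter_upwards [ae_fstMarginal_ne_zero hP hP0, ae_sndMarginal_ne_zero hP hP0] with w hf hg
  exact klIntegrand_prodDensity_right hf hg (hG0 _) (hH0 _)

end Divergence

/-! ### Block-diagonal matrices and second moments -/

section BlockDiagonal

variable {ι κ R : Type*} [Fintype ι] [DecidableEq ι] [Fintype κ] [DecidableEq κ] [CommRing R]

theorem inv_fromBlocks_diagonal {A : Matrix ι ι R} {D : Matrix κ κ R} (h : IsUnit A ↔ IsUnit D) :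
    (fromBlocks A 0 0 D)⁻¹ = fromBlocks A⁻¹ 0 0 D⁻¹ := by
  simp [inv_fromBlocks_zero₂₁_of_isUnit_iff A 0 D h]

theorem trace_inv_fromBlocks_diagonal_mul {A : Matrix ι ι R} {D : Matrix κ κ R}
    (B : Matrix ι κ R) (C : Matrix κ ι R) (hA : IsUnit A) (hD : IsUnit D) :
    ((fromBlocks A 0 0 D)⁻¹ * fromBlocks A B C D).trace = Fintype.card (ι ⊕ κ) := by
  rw [inv_fromBlocks_diagonal (iff_of_true hA hD), fromBlocks_multiply]
  rw [isUnit_iff_isUnit_det] at hA hD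
  simp [trace, nonsing_inv_mul _ hA, nonsing_inv_mul _ hD]

end BlockDiagonal

section SecondMoments

variable {Ω ι : Type*} [MeasurableSpace Ω] [Fintype ι] {μ : Measure Ω} {r : Ω → ℝ}

theorem mul_dotProduct_mulVec_eq_sum (c : ℝ) (A : Matrix ι ι ℝ) (v : ι → ℝ) :
    c * (v ⬝ᵥ A *ᵥ v) = ∑ k, ∑ l, A k l * (c * (v l * v k)) := by
  simp only [dotProduct, mulVec, Finset.mul_sum]
  exact Finset.sum_congr rfl fun k _ => Finset.sum_congr rfl fun l _ => by ring

theorem integrable_mul_dotProduct_mulVec {V : Ω → ι → ℝ}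
    (h : ∀ k l, Integrable (fun ω => r ω * (V ω k * V ω l)) μ) (A : Matrix ι ι ℝ) :
    Integrable (fun ω => r ω * (V ω ⬝ᵥ A *ᵥ V ω)) μ := by
  simp only [mul_dotProduct_mulVec_eq_sum]
  exact integrable_finsetSum _ fun k _ => integrable_finsetSum _ fun l _ => (h l k).const_mul _

theorem integral_mul_dotProduct_mulVec {V : Ω → ι → ℝ} {S : Matrix ι ι ℝ}
    (h : ∀ k l, Integrable (fun ω => r ω * (V ω k * V ω l)) μ)
    (hS : ∀ k l, ∫ ω, r ω * (V ω k * V ω l) ∂μ = S k l) (A : Matrix ι ι ℝ) :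
    ∫ ω, r ω * (V ω ⬝ᵥ A *ᵥ V ω) ∂μ = (A * S).trace := by
  have hint : ∀ k l, Integrable (fun ω => A k l * (r ω * (V ω l * V ω k))) μ :=
    fun k l => (h l k).const_mul _
  simp only [mul_dotProduct_mulVec_eq_sum, trace, diag_apply, mul_apply]
  rw [integral_finsetSum _ fun k _ => integrable_finsetSum _ fun l _ => hint k l]
  refine Finset.sum_congr rfl fun k _ => ?_
  rw [integral_finsetSum _ fun l _ => hint k l]
  exact Finset.sum_congr rfl fun l _ => by rw [integral_const_mul, hS]

end SecondMoments

/-! ### Gaussian densities -/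

section Gaussian

variable {ι κ : Type*} [Fintype ι] [DecidableEq ι] [Fintype κ] [DecidableEq κ]

theorem gaussianPdf_pos (m : ι → ℝ) {T : Matrix ι ι ℝ} (hT : 0 < T.det) (z : ι → ℝ) :
    0 < gaussianPdf m T z := by
  rw [gaussianPdf]
  positivity

theorem continuous_gaussianPdf (m : ι → ℝ) (T : Matrix ι ι ℝ) : Continuous (gaussianPdf m T) := by
  unfold gaussianPdf
  fun_prop

theorem log_gaussianPdf (m : ι → ℝ) {T : Matrix ι ι ℝ} (hT : 0 < T.det) (z : ι → ℝ) :
    log (gaussianPdf m T z) =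
      -(1 / 2) * (Fintype.card ι * log (2 * π) + log T.det + (z - m) ⬝ᵥ T⁻¹ *ᵥ (z - m)) := by
  have hpi : (0 : ℝ) < (2 * π) ^ Fintype.card ι := by positivity
  have hsqrt : 0 < √((2 * π) ^ Fintype.card ι * T.det) := sqrt_pos.2 (mul_pos hpi hT)
  rw [gaussianPdf, log_mul (inv_ne_zero hsqrt.ne') (exp_ne_zero _), log_inv, log_exp,
    log_sqrt (mul_pos hpi hT).le, log_mul hpi.ne' hT.ne', log_pow]
  ring

theorem gaussianPdf_fromBlocks_diagonal (m : ι ⊕ κ → ℝ) {A : Matrix ι ι ℝ} {D : Matrix κ κ ℝ}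
    (hA : 0 < A.det) (hD : 0 < D.det) (x : ι → ℝ) (y : κ → ℝ) :
    gaussianPdf m (fromBlocks A 0 0 D) (Sum.elim x y) =
      gaussianPdf (m ∘ Sum.inl) A x * gaussianPdf (m ∘ Sum.inr) D y := by
  have hA_unit : IsUnit A := (isUnit_iff_isUnit_det A).2 hA.ne'.isUnit
  have hD_unit : IsUnit D := (isUnit_iff_isUnit_det D).2 hD.ne'.isUnit
  have hsub : Sum.elim x y - m = Sum.elim (x - m ∘ Sum.inl) (y - m ∘ Sum.inr) := by
    ext (i | j) <;> rfl
  have hnorm : √((2 * π) ^ Fintype.card (ι ⊕ κ) * (A.det * D.det)) =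
      √((2 * π) ^ Fintype.card ι * A.det) * √((2 * π) ^ Fintype.card κ * D.det) := by
    rw [← sqrt_mul (by positivity), Fintype.card_sum, pow_add, mul_mul_mul_comm]
  simp only [gaussianPdf, det_fromBlocks_zero₂₁, hnorm, hsub,
    inv_fromBlocks_diagonal (iff_of_true hA_unit hD_unit), fromBlocks_mulVec, zero_mulVec, add_zero,
    zero_add, sumElim_dotProduct_sumElim, Sum.elim_comp_inl, Sum.elim_comp_inr, mul_add, exp_add,
    mul_inv, mul_mul_mul_comm]

variable {μ : Measure (ι → ℝ)} {r : (ι → ℝ) → ℝ} {m : ι → ℝ} {S T : Matrix ι ι ℝ}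

theorem integrable_mul_log_gaussianPdf (hr : Integrable r μ)
    (h : ∀ k l, Integrable (fun z => r z * ((z k - m k) * (z l - m l))) μ) (hT : 0 < T.det) :
    Integrable (fun z => r z * log (gaussianPdf m T z)) μ := by
  have hquad := integrable_mul_dotProduct_mulVec (V := fun z => z - m) h T⁻¹
  refine (((hr.mul_const (Fintype.card ι * log (2 * π) + log T.det)).add hquad).const_mul
    (-(1 / 2))).congr (.of_forall fun z => ?_)
  simp only [Pi.add_apply, log_gaussianPdf m hT]
  ring

theorem integral_mul_log_gaussianPdf (hr : Integrable r μ) (hr1 : ∫ z, r z ∂μ = 1)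
    (h : ∀ k l, Integrable (fun z => r z * ((z k - m k) * (z l - m l))) μ)
    (hS : ∀ k l, ∫ z, r z * ((z k - m k) * (z l - m l)) ∂μ = S k l) (hT : 0 < T.det) :
    ∫ z, r z * log (gaussianPdf m T z) ∂μ =
      -(1 / 2) * (Fintype.card ι * log (2 * π) + log T.det + (T⁻¹ * S).trace) := by
  have hquad := integrable_mul_dotProduct_mulVec (V := fun z => z - m) h T⁻¹
  simp only [log_gaussianPdf m hT, mul_left_comm (r _), integral_const_mul]
  simp only [mul_add (r _) (_ + _)]
  rw [integral_add (hr.mul_const _) hquad, integral_mul_const, hr1, one_mul,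
    integral_mul_dotProduct_mulVec (V := fun z => z - m) h hS]

end Gaussian

/-! ### Splitting the coordinates -/

section SumElim

variable {ι κ : Type*}

theorem sumPiEquivProdPi_symm_eq_sumElim :
    ⇑(MeasurableEquiv.sumPiEquivProdPi fun _ : ι ⊕ κ => ℝ).symm = fun w => Sum.elim w.1 w.2 := by
  ext w (i | j) <;> rfl

variable [Fintype ι] [Fintype κ]

theorem integral_eq_integral_sumElim (F : (ι ⊕ κ → ℝ) → ℝ) :
    ∫ z, F z = ∫ w : (ι → ℝ) × (κ → ℝ), F (Sum.elim w.1 w.2) := by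
  rw [← (volume_measurePreserving_sumPiEquivProdPi_symm fun _ : ι ⊕ κ => ℝ).integral_comp',
    sumPiEquivProdPi_symm_eq_sumElim]

theorem integrable_iff_integrable_sumElim (F : (ι ⊕ κ → ℝ) → ℝ) :
    Integrable F ↔ Integrable fun w : (ι → ℝ) × (κ → ℝ) => F (Sum.elim w.1 w.2) := by
  rw [← (volume_measurePreserving_sumPiEquivProdPi_symm fun _ : ι ⊕ κ => ℝ).integrable_comp_emb
    (MeasurableEquiv.measurableEmbedding _), sumPiEquivProdPi_symm_eq_sumElim]
  rfl

end SumElim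

/-! ### The decomposition -/

section Decomposition

variable {ι κ : Type*} [Fintype ι] [DecidableEq ι] [Fintype κ] [DecidableEq κ]
  {p : (ι ⊕ κ → ℝ) → ℝ} {m : ι ⊕ κ → ℝ} {A : Matrix ι ι ℝ} {B : Matrix ι κ ℝ}
  {C : Matrix κ ι ℝ} {D : Matrix κ κ ℝ}

theorem integral_klIntegrand_marginals_eq_sub_gaussianPdf (hp : Integrable p)
    (hp0 : ∀ z, 0 ≤ p z) (hp1 : ∫ z, p z = 1) {pX : (ι → ℝ) → ℝ} {pY : (κ → ℝ) → ℝ}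
    (hpX : ∀ x, pX x = ∫ y, p (Sum.elim x y)) (hpY : ∀ y, pY y = ∫ x, p (Sum.elim x y))
    (hA : 0 < A.det) (hD : 0 < D.det)
    (hKL : Integrable (klIntegrand p (gaussianPdf m (fromBlocks A 0 0 D))))
    (hKLm : Integrable (klIntegrand (fun z => pX (fun i => z (.inl i)) * pY (fun j => z (.inr j)))
      (gaussianPdf m (fromBlocks A 0 0 D)))) :
    ∫ z, klIntegrand p (fun z => pX (fun i => z (.inl i)) * pY (fun j => z (.inr j))) z =
      (∫ z, klIntegrand p (gaussianPdf m (fromBlocks A 0 0 D)) z) -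
        ∫ z, klIntegrand (fun z => pX (fun i => z (.inl i)) * pY (fun j => z (.inr j)))
          (gaussianPdf m (fromBlocks A 0 0 D)) z := by
  let P : (ι → ℝ) × (κ → ℝ) → ℝ := fun w => p (Sum.elim w.1 w.2)
  obtain rfl : pX = fstMarginal volume P := funext hpX
  obtain rfl : pY = sndMarginal volume P := funext hpY
  rw [integrable_iff_integrable_sumElim] at hp hKL hKLm
  rw [integral_eq_integral_sumElim] at hp1
  simp only [integral_eq_integral_sumElim, klIntegrand,
    gaussianPdf_fromBlocks_diagonal m hA hD] at hKL hKLm ⊢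
  exact integral_klIntegrand_prodDensity_marginals hp (fun w => hp0 _) hp1
    (continuous_gaussianPdf _ _).aemeasurable (continuous_gaussianPdf _ _).aemeasurable
    (fun x => (gaussianPdf_pos _ hA x).ne') (fun y => (gaussianPdf_pos _ hD y).ne') hKL hKLm

theorem integrable_and_integral_klIntegrand_gaussianPdf_fromBlocks_diagonal (hp : Integrable p)
    (hp1 : ∫ z, p z = 1)
    (h : ∀ k l, Integrable fun z => p z * ((z k - m k) * (z l - m l)))
    (hcov : ∀ k l, ∫ z, p z * ((z k - m k) * (z l - m l)) = fromBlocks A B C D k l)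
    (hS : 0 < (fromBlocks A B C D).det) (hA : 0 < A.det) (hD : 0 < D.det)
    (hKL : Integrable (klIntegrand p (gaussianPdf m (fromBlocks A B C D)))) :
    Integrable (klIntegrand p (gaussianPdf m (fromBlocks A 0 0 D))) ∧
      ∫ z, klIntegrand p (gaussianPdf m (fromBlocks A 0 0 D)) z =
        (∫ z, klIntegrand p (gaussianPdf m (fromBlocks A B C D)) z) +
          1 / 2 * (log A.det + log D.det - log (fromBlocks A B C D).det) := by
  have hdet : (fromBlocks A 0 0 D).det = A.det * D.det := det_fromBlocks_zero₂₁ A 0 D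
  have hS₀ : 0 < (fromBlocks A 0 0 D).det := hdet ▸ mul_pos hA hD
  have hpos := fun z => (gaussianPdf_pos m hS z).ne'
  have hpos₀ := fun z => (gaussianPdf_pos m hS₀ z).ne'
  have hlog := integrable_mul_log_gaussianPdf hp h hS
  have hlog₀ := integrable_mul_log_gaussianPdf hp h hS₀
  refine ⟨integrable_klIntegrand_of_integrable_mul_log hpos hpos₀ hlog hlog₀ hKL, ?_⟩
  rw [integral_klIntegrand_eq_add hpos hpos₀ hlog hlog₀ hKL,
    integral_mul_log_gaussianPdf hp hp1 h hcov hS, integral_mul_log_gaussianPdf hp hp1 h hcov hS₀,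
    trace_inv_fromBlocks_diagonal_mul B C ((isUnit_iff_isUnit_det A).2 hA.ne'.isUnit)
      ((isUnit_iff_isUnit_det D).2 hD.ne'.isUnit),
    nonsing_inv_mul _ hS.ne'.isUnit, trace_one, hdet, log_mul hA.ne' hD.ne']
  ring

/-- The Gaussians need not be centred at the mean of `p`: here `m` is any point, and `S` is the
matrix of second moments of `p` about `m`. -/
theorem mutual_information_gaussian_decomposition_general
    {pX : (ι → ℝ) → ℝ} {pY : (κ → ℝ) → ℝ} {S : Matrix (ι ⊕ κ) (ι ⊕ κ) ℝ}
    (hp0 : ∀ z, 0 ≤ p z) (hp1 : ∫ z, p z = 1)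
    (hpX : ∀ x, pX x = ∫ y, p (Sum.elim x y)) (hpY : ∀ y, pY y = ∫ x, p (Sum.elim x y))
    (h_moment : ∀ k l, Integrable fun z => p z * ((z k - m k) * (z l - m l)))
    (hS : ∀ k l, ∫ z, p z * ((z k - m k) * (z l - m l)) = S k l)
    (hS_posdef : S.PosDef) (hblocks : S = fromBlocks A B C D)
    (hKL : Integrable (klIntegrand p (gaussianPdf m S)))
    (hKLm : Integrable (klIntegrand (fun z => pX (fun i => z (.inl i)) * pY (fun j => z (.inr j)))
      (gaussianPdf m (fromBlocks A 0 0 D)))) :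
    ∫ z, klIntegrand p (fun z => pX (fun i => z (.inl i)) * pY (fun j => z (.inr j))) z =
      1 / 2 * (log A.det + log D.det - log S.det) + (∫ z, klIntegrand p (gaussianPdf m S) z) -
        ∫ z, klIntegrand (fun z => pX (fun i => z (.inl i)) * pY (fun j => z (.inr j)))
          (gaussianPdf m (fromBlocks A 0 0 D)) z := by
  subst hblocks
  have hp : Integrable p := not_imp_comm.1 integral_undef (hp1 ▸ one_ne_zero)
  have hA : 0 < A.det := (hS_posdef.submatrix Sum.inl_injective).det_pos
  have hD : 0 < D.det := (hS_posdef.submatrix Sum.inr_injective).det_pos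
  obtain ⟨hKL₀, hKL₀_eq⟩ := integrable_and_integral_klIntegrand_gaussianPdf_fromBlocks_diagonal
    hp hp1 h_moment hS hS_posdef.det_pos hA hD hKL
  rw [integral_klIntegrand_marginals_eq_sub_gaussianPdf hp hp0 hp1 hpX hpY hA hD hKL₀ hKLm,
    hKL₀_eq, add_comm]

end Decomposition

/-- Let `(ξ, η)` be an absolutely continuous pair of random vectors with
joint density `p`, marginal densities `pX` and `pY`, mean `m = (mξ, mη)`, and non-singular
covariance matrix `S` with blocks `Sxx, Sxy, Syx, Syy`.  Then

`I(ξ; η) = (1/2)[log det Sxx + log det Syy − log det S]`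
`  + D_KL(p ‖ N(m, S)) − D_KL(pX ⊗ pY ‖ N(m, diag(Sxx, Syy)))`,

where `diag(Sxx, Syy)` is the block-diagonal matrix with blocks `Sxx` and `Syy`.
The joint vector `(ξ, η)` is modelled as a random vector indexed by `Fin dx ⊕ Fin dy`,
with `ξ` the `Sum.inl` coordinates and `η` the `Sum.inr` coordinates. -/
theorem mutual_information_gaussian_decomposition
    (dx dy : ℕ)
    -- joint density of (ξ, η) on ℝ^{dx+dy} and its marginals
    (p : ((Fin dx ⊕ Fin dy) → ℝ) → ℝ)
    (hp_meas : Measurable p)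
    (hp_nonneg : ∀ z, 0 ≤ p z)
    (hp_int : ∫ z, p z = 1)
    (pX : (Fin dx → ℝ) → ℝ) (hpX : ∀ x, pX x = ∫ y : Fin dy → ℝ, p (Sum.elim x y))
    (pY : (Fin dy → ℝ) → ℝ) (hpY : ∀ y, pY y = ∫ x : Fin dx → ℝ, p (Sum.elim x y))
    -- on the support of p the marginal densities of p are positive (holds a.e.)
    (hp_supp : ∀ᵐ z : (Fin dx ⊕ Fin dy) → ℝ ∂volume,
      0 < p z → 0 < pX (fun i => z (Sum.inl i)) ∧ 0 < pY (fun j => z (Sum.inr j)))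
    -- mean and covariance matrix of (ξ, η), with block structure
    (m : (Fin dx ⊕ Fin dy) → ℝ)
    (S : Matrix (Fin dx ⊕ Fin dy) (Fin dx ⊕ Fin dy) ℝ)
    (h_moment₁ : ∀ k, Integrable fun z : (Fin dx ⊕ Fin dy) → ℝ => p z * z k)
    (hm : ∀ k, (∫ z : (Fin dx ⊕ Fin dy) → ℝ, p z * z k) = m k)
    (h_moment₂ : ∀ k l, Integrable fun z : (Fin dx ⊕ Fin dy) → ℝ =>
      p z * ((z k - m k) * (z l - m l)))
    (hScov : ∀ k l, (∫ z : (Fin dx ⊕ Fin dy) → ℝ, p z * ((z k - m k) * (z l - m l))) = S k l)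
    (hS_posdef : S.PosDef)
    (Sxx : Matrix (Fin dx) (Fin dx) ℝ) (Sxy : Matrix (Fin dx) (Fin dy) ℝ)
    (Syx : Matrix (Fin dy) (Fin dx) ℝ) (Syy : Matrix (Fin dy) (Fin dy) ℝ)
    (hblocks : S = Matrix.fromBlocks Sxx Sxy Syx Syy)
    -- integrability of all the integrands involved
    (h_int_I : Integrable fun z : (Fin dx ⊕ Fin dy) → ℝ =>
      p z * Real.log (p z / (pX (fun i => z (Sum.inl i)) * pY (fun j => z (Sum.inr j)))))
    (h_int_KL : Integrable fun z : (Fin dx ⊕ Fin dy) → ℝ =>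
      p z * Real.log (p z / gaussianPdf m S z))
    (h_int_KLm : Integrable fun z : (Fin dx ⊕ Fin dy) → ℝ =>
      pX (fun i => z (Sum.inl i)) * pY (fun j => z (Sum.inr j)) *
        Real.log ((pX (fun i => z (Sum.inl i)) * pY (fun j => z (Sum.inr j)))
          / gaussianPdf m (Matrix.fromBlocks Sxx 0 0 Syy) z))
    (h_int_pp : Integrable fun z : (Fin dx ⊕ Fin dy) → ℝ => p z * Real.log (p z)) :
    -- I(ξ; η) = (1/2)[log det Sxx + log det Syy − log det S]
    --           + D_KL(p ‖ N(m, S)) − D_KL(pX ⊗ pY ‖ N(m, diag(Sxx, Syy)))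
    (∫ z : (Fin dx ⊕ Fin dy) → ℝ,
        p z * Real.log (p z / (pX (fun i => z (Sum.inl i)) * pY (fun j => z (Sum.inr j)))))
      = (1 / 2 : ℝ) * (Real.log Sxx.det + Real.log Syy.det - Real.log S.det)
        + (∫ z : (Fin dx ⊕ Fin dy) → ℝ, p z * Real.log (p z / gaussianPdf m S z))
        - ∫ z : (Fin dx ⊕ Fin dy) → ℝ,
            pX (fun i => z (Sum.inl i)) * pY (fun j => z (Sum.inr j)) *
              Real.log ((pX (fun i => z (Sum.inl i)) * pY (fun j => z (Sum.inr j)))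
                / gaussianPdf m (Matrix.fromBlocks Sxx 0 0 Syy) z) :=
  mutual_information_gaussian_decomposition_general hp_nonneg hp_int hpX hpY h_moment₂ hScov
    hS_posdef hblocks h_int_KL h_int_KLm
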